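/- Let r be a real 4×4 matrix and ρ_E = Σ_{i,j} r_{ij} Π_i⊗Π_j the corresponding 16×16 matrix (first Bell projector on qubits A'B', second on A''B''). For every 4×4 complex matrix X, the partial trace over the qubits A''B'' of the product ρ_E · (I_4 ⊗ X^T) equals Σ_{i=1}^4 ( Σ_{j=1}^4 r_{ij} · tr(Π_j X) ) Π_i; in particular, the output of the completely positive map corresponding to ρ_E is always diagonal in the Bell basis, and for a Bell-diagonal input X = Σ_j β_j Π_j the output is Σ_i (Σ_j r_{ij} β_j) Π_i. -/

import Mathlib

open Matrix Complex
open scoped Kronecker ComplexOrder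

noncomputable section
namespace Paper

abbrev Q2 := Fin 2 × Fin 2
abbrev M4 := Matrix Q2 Q2 ℂ
abbrev M16 := Matrix (Q2 × Q2) (Q2 × Q2) ℂ

/-- `1/√2` as a complex number. -/
def invSqrt2 : ℂ := ((Real.sqrt 2)⁻¹ : ℝ)

/-- The four Bell states `|Φ₁⟩,…,|Φ₄⟩` as vectors in `ℂ²⊗ℂ²`
(product basis indexed by `Fin 2 × Fin 2`). -/
def bell : Fin 4 → Q2 → ℂ :=
  ![fun p => !![invSqrt2, 0; 0, invSqrt2] p.1 p.2,
    fun p => !![invSqrt2, 0; 0, -invSqrt2] p.1 p.2,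
    fun p => !![0, invSqrt2; invSqrt2, 0] p.1 p.2,
    fun p => !![0, invSqrt2; -invSqrt2, 0] p.1 p.2]

/-- The Bell projectors `Π_i = |Φ_i⟩⟨Φ_i|`. -/
def BellProj (i : Fin 4) : M4 := vecMulVec (bell i) (star (bell i))

/-- The Pauli matrices `σ_x, σ_y, σ_z`. -/
def pauli : Fin 3 → Matrix (Fin 2) (Fin 2) ℂ :=
  ![!![0, 1; 1, 0], !![0, -I; I, 0], !![1, 0; 0, -1]]

/-- Reindexing `((a',b'),(a'',b'')) ↦ ((a',a''),(b',b''))`. -/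
def swapMid : (Q2 × Q2) ≃ (Q2 × Q2) where
  toFun p := ((p.1.1, p.2.1), (p.1.2, p.2.2))
  invFun p := ((p.1.1, p.2.1), (p.1.2, p.2.2))
  left_inv _ := rfl
  right_inv _ := rfl

/-- The rank-one matrix `x x†`. -/
def pureMat {d : Type*} (x : d → ℂ) : Matrix d d ℂ := vecMulVec x (star x)

/-- Separability of a 16×16 four-qubit matrix (qubit order A',B',A'',B'')
across the partition A = (A',A''), B = (B',B''). -/
def SepAB (ρ : M16) : Prop :=
  ∃ (n : ℕ) (x y : Fin n → Q2 → ℂ),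
    (Matrix.reindex swapMid swapMid ρ) = ∑ k, (pureMat (x k)) ⊗ₖ (pureMat (y k))


/-- Partial trace over the qubits A'' and B'' (the second 4-dimensional factor). -/
def ptraceSecond (M : M16) : M4 := fun a c => ∑ b : Q2, M (a, b) (c, b)

/-- The 16×16 matrix corresponding to a 4×4 real matrix `r` of Bell coefficients. -/
def rhoE (r : Matrix (Fin 4) (Fin 4) ℝ) : M16 :=
  ∑ i, ∑ j, (r i j : ℂ) • (BellProj i ⊗ₖ BellProj j)

section PartialTrace

variable {ι κ m m' n R : Type*} [Fintype n] [CommSemiring R]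

/-- The partial trace over the right tensor factor of a matrix on a product index type, as a
linear map; the left factor may be rectangular. For four qubits it is `ptraceSecond`. -/
def partialTraceRight : Matrix (m × n) (m' × n) R →ₗ[R] Matrix m m' R where
  toFun M := of fun a c => ∑ b, M (a, b) (c, b)
  map_add' M N := by
    ext a c
    exact Finset.sum_add_distrib
  map_smul' t M := by
    ext a c
    exact (Finset.mul_sum _ _ _).symm

lemma partialTraceRight_kronecker (A : Matrix m m' R) (B : Matrix n n R) :
    partialTraceRight (A ⊗ₖ B) = B.trace • A := by
  ext a c
  calc ∑ b, A a c * B b b = A a c * B.trace := (Finset.mul_sum _ _ _).symm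
    _ = B.trace * A a c := mul_comm _ _

lemma trace_mul_transpose_of_isSymm {A : Matrix n n R} (hA : A.IsSymm) (X : Matrix n n R) :
    (A * Xᵀ).trace = (A * X).trace := by
  rw [← trace_transpose_mul A X, hA.eq]

lemma trace_vecMulVec_self_mul_vecMulVec_self (u v : n → R) :
    (vecMulVec u u * vecMulVec v v).trace = (u ⬝ᵥ v) ^ 2 := by
  rw [vecMulVec_mul_vecMulVec, trace_vecMulVec, dotProduct_smul, smul_eq_mul, sq]

lemma trace_mul_sum_smul_of_orthonormal [Fintype κ] [DecidableEq κ] {Q : κ → Matrix n n R}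
    (hQ : ∀ j k, (Q j * Q k).trace = if j = k then 1 else 0) (β : κ → R) (j : κ) :
    (Q j * ∑ k, β k • Q k).trace = β j := by
  simp [Finset.mul_sum, trace_sum, hQ]

lemma partialTraceRight_sum_kronecker_mul_one_kronecker_transpose [Fintype ι] [Fintype κ]
    [Fintype m'] [DecidableEq m'] (r : ι → κ → R) (P : ι → Matrix m m' R)
    {Q : κ → Matrix n n R} (hQ : ∀ j, (Q j).IsSymm) (X : Matrix n n R) :
    partialTraceRight ((∑ i, ∑ j, r i j • (P i ⊗ₖ Q j)) * ((1 : Matrix m' m' R) ⊗ₖ Xᵀ)) =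
      ∑ i, (∑ j, r i j * (Q j * X).trace) • P i := by
  have term (i : ι) (j : κ) :
      partialTraceRight ((P i ⊗ₖ Q j) * ((1 : Matrix m' m' R) ⊗ₖ Xᵀ)) =
        (Q j * X).trace • P i := by
    rw [← mul_kronecker_mul, Matrix.mul_one, partialTraceRight_kronecker,
      trace_mul_transpose_of_isSymm (hQ j)]
  simp only [Matrix.sum_mul, Matrix.smul_mul, map_sum, map_smul, term, smul_smul, Finset.sum_smul]

theorem stmt11_general [Fintype ι] [Fintype κ] [DecidableEq κ] [Fintype m'] [DecidableEq m']
    (r : ι → κ → R) (P : ι → Matrix m m' R) {Q : κ → Matrix n n R}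
    (hsymm : ∀ j, (Q j).IsSymm)
    (horth : ∀ j k, (Q j * Q k).trace = if j = k then 1 else 0) :
    (∀ X : Matrix n n R,
      partialTraceRight ((∑ i, ∑ j, r i j • (P i ⊗ₖ Q j)) * ((1 : Matrix m' m' R) ⊗ₖ Xᵀ)) =
        ∑ i, (∑ j, r i j * (Q j * X).trace) • P i) ∧
    (∀ β : κ → R,
      partialTraceRight ((∑ i, ∑ j, r i j • (P i ⊗ₖ Q j)) *
          ((1 : Matrix m' m' R) ⊗ₖ (∑ j, β j • Q j)ᵀ)) =
        ∑ i, (∑ j, r i j * β j) • P i) := by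
  have output := partialTraceRight_sum_kronecker_mul_one_kronecker_transpose r P hsymm
  refine ⟨output, fun β => ?_⟩
  simp only [output, trace_mul_sum_smul_of_orthonormal horth]

end PartialTrace

section BellBasis

lemma invSqrt2_mul_self : invSqrt2 * invSqrt2 = 2⁻¹ := by
  rw [invSqrt2, ← ofReal_mul, ← mul_inv, Real.mul_self_sqrt zero_le_two]
  norm_num

lemma star_invSqrt2 : star invSqrt2 = invSqrt2 :=
  conj_ofReal _

lemma star_bell (i : Fin 4) : star (bell i) = bell i := by
  ext ⟨a, b⟩
  rw [Pi.star_apply]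
  fin_cases i <;> fin_cases a <;> fin_cases b <;>
    simp [bell, star_invSqrt2, -RCLike.star_def]

lemma bell_dotProduct_bell (i j : Fin 4) : bell i ⬝ᵥ bell j = if i = j then 1 else 0 := by
  fin_cases i <;> fin_cases j <;>
    norm_num [bell, dotProduct, Fintype.sum_prod_type, invSqrt2_mul_self]

lemma bellProj_eq_vecMulVec (i : Fin 4) : BellProj i = vecMulVec (bell i) (bell i) := by
  rw [BellProj, star_bell]

lemma isSymm_bellProj (i : Fin 4) : (BellProj i).IsSymm := by
  rw [IsSymm, bellProj_eq_vecMulVec, transpose_vecMulVec]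

lemma trace_bellProj_mul_bellProj (i j : Fin 4) :
    (BellProj i * BellProj j).trace = if i = j then 1 else 0 := by
  rw [bellProj_eq_vecMulVec, bellProj_eq_vecMulVec, trace_vecMulVec_self_mul_vecMulVec_self,
    bell_dotProduct_bell, ite_pow, one_pow, zero_pow two_ne_zero]

end BellBasis

/-- for every 4×4 matrix `X`,
`tr_{A''B''}(ρ_E · (I₄ ⊗ Xᵀ)) = Σ_i (Σ_j r_{ij} tr(Π_j X)) Π_i`; in particular
the output of the CPM corresponding to `ρ_E` is always Bell diagonal, and for a
Bell-diagonal input `X = Σ_j β_j Π_j` the output is `Σ_i (Σ_j r_{ij} β_j) Π_i`. -/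
theorem stmt11 (r : Matrix (Fin 4) (Fin 4) ℝ) :
    (∀ X : M4,
      ptraceSecond (rhoE r * ((1 : M4) ⊗ₖ Xᵀ)) =
        ∑ i, (∑ j, (r i j : ℂ) * (BellProj j * X).trace) • BellProj i) ∧
    (∀ β : Fin 4 → ℂ,
      ptraceSecond (rhoE r * ((1 : M4) ⊗ₖ (∑ j, β j • BellProj j)ᵀ)) =
        ∑ i, (∑ j, (r i j : ℂ) * β j) • BellProj i) := by
  exact stmt11_general (fun i j => (r i j : ℂ)) BellProj isSymm_bellProj
    trace_bellProj_mul_bellProj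

end Paper
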